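/- Let a, b, c be pairwise distinct elements of ℂ ∖ {0,1}; set u₁ = 1 + u + v, v₁ = a + b·u + c·v, A₁ = (b−z)/(b−c), B₁ = (c−z)/(c−b), a₁ = (a−b)/(b−c), b₁ = (a−c)/(c−b), and P(z) = z(z−1)·A₁B₁(A₁b₁ − B₁a₁). Let K = Frac(ℂ[z,w₂,t₃,x]/(w₂³ − P(z), x³ − t₃(t₃+1))) be the function field of the product C₁ × F₁ of the curves C₁: w₂³ = P(z) and F₁: x³ = t₃(t₃+1), let τ be the order-3 automorphism of K with τ(w₂) = ω²·w₂, τ(x) = ω²·x (fixing z, t₃), and let ρ be the order-3 automorphism of K with ρ(w₂) = ω·w₂ (fixing z, t₃, x), which preserves the fixed field L = K^τ. Then there is a ℂ-algebra isomorphism φ from the function field of the affine surface S: w³·u₁v₁(v₁−u₁) = u·v (coordinates (w,u,v)) onto L such that φ intertwines the order-3 automorphism w ↦ ω²·w of Frac(S) with the restriction of ρ to L. In other words, S is G-birationally equivalent to the quotient (C₁ × F₁)/G with its residual G = ℤ/3ℤ action coming from the curve factor C₁. -/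

import Mathlib

/-!
Formalization conventions.

* The function field of an affine variety whose coordinate ring `ℂ[x₁,…,xₙ]/I` is an
  integral domain is formalized as `FractionRing` of that coordinate ring (for the total
  rings of fractions of the rings appearing here this is the function field).
* Two such varieties are birationally equivalent iff their function fields are
  isomorphic as `ℂ`-algebras.
-/

noncomputable section
open MvPolynomial

/-- `ω = exp(2πi/3) ∈ ℂ`, a fixed primitive cube root of unity. -/
def ω : ℂ := Complex.exp (2 * Real.pi * Complex.I / 3)

/-- Coordinate ring of the affine hypersurface `f = 0` in `ℂⁿ`. -/
abbrev HSurf {n : ℕ} (f : MvPolynomial (Fin n) ℂ) : Type :=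
  MvPolynomial (Fin n) ℂ ⧸ Ideal.span {f}

/-- Coordinate ring of the affine variety `f = g = 0` in `ℂⁿ`. -/
abbrev HSurf2 {n : ℕ} (f g : MvPolynomial (Fin n) ℂ) : Type :=
  MvPolynomial (Fin n) ℂ ⧸ Ideal.span {f, g}

/-- The image of a polynomial `p` in the function field of the hypersurface `f = 0`. -/
def cls {n : ℕ} (f : MvPolynomial (Fin n) ℂ) (p : MvPolynomial (Fin n) ℂ) :
    FractionRing (HSurf f) :=
  algebraMap (HSurf f) (FractionRing (HSurf f)) (Ideal.Quotient.mk _ p)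

/-- The image of a polynomial `p` in the function field of the variety `f = g = 0`. -/
def cls2 {n : ℕ} (f g : MvPolynomial (Fin n) ℂ) (p : MvPolynomial (Fin n) ℂ) :
    FractionRing (HSurf2 f g) :=
  algebraMap (HSurf2 f g) (FractionRing (HSurf2 f g)) (Ideal.Quotient.mk _ p)

/-- `u₁ = 1 + u + v` in the coordinates of `S` (`w = X 0`, `u = X 1`, `v = X 2`). -/
def u₁S : MvPolynomial (Fin 3) ℂ := 1 + X 1 + X 2

/-- `v₁ = a + b·u + c·v`. -/
def v₁S (a b c : ℂ) : MvPolynomial (Fin 3) ℂ := C a + C b * X 1 + C c * X 2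

/-- Defining polynomial of the affine surface `S : w³·u₁v₁(v₁−u₁) = u·v`. -/
def pS (a b c : ℂ) : MvPolynomial (Fin 3) ℂ :=
  X 0 ^ 3 * u₁S * v₁S a b c * (v₁S a b c - u₁S) - X 1 * X 2

/-- The constant `a₁ = (a−b)/(b−c)`. -/
def a₁ (a b c : ℂ) : ℂ := (a - b) / (b - c)

/-- The constant `b₁ = (a−c)/(c−b)`. -/
def b₁ (a b c : ℂ) : ℂ := (a - c) / (c - b)

/-- `A₁ = (b−z)/(b−c)` as a polynomial in the coordinates of `C₁ × F₁`
(`z = X 0`, `w₂ = X 1`, `t₃ = X 2`, `x = X 3`). -/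
def A₁4 (b c : ℂ) : MvPolynomial (Fin 4) ℂ := C (b - c)⁻¹ * (C b - X 0)

/-- `B₁ = (c−z)/(c−b)`. -/
def B₁4 (b c : ℂ) : MvPolynomial (Fin 4) ℂ := C (c - b)⁻¹ * (C c - X 0)

/-- `P(z) = z(z−1)·A₁B₁(A₁b₁ − B₁a₁)` as a polynomial in `z = X 0`. -/
def P4 (a b c : ℂ) : MvPolynomial (Fin 4) ℂ :=
  X 0 * (X 0 - 1) * A₁4 b c * B₁4 b c * (A₁4 b c * C (b₁ a b c) - B₁4 b c * C (a₁ a b c))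

/-- Defining polynomial of the curve `C₁ : w₂³ = P(z)`, as an equation in `ℂ⁴`. -/
def pC₁ (a b c : ℂ) : MvPolynomial (Fin 4) ℂ := X 1 ^ 3 - P4 a b c

/-- Defining polynomial of the curve `F₁ : x³ = t₃(t₃+1)`, as an equation in `ℂ⁴`. -/
def pF₁4 : MvPolynomial (Fin 4) ℂ := X 3 ^ 3 - X 2 * (X 2 + 1)

/-!
On `S`, the equation `v₁ = z * u₁` is linear in `u` and `v` for fixed `z`, and parametrising the
line it defines by `t₃` expresses `u` and `v` as rational functions of `z` and `t₃`. The equation of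
`S` then turns into `((b - c) * w₂ * u₁ * w) ^ 3 = ((z - a) * x) ^ 3`, and
`w = (z - a) * x / ((b - c) * w₂ * u₁)` is a solution. It is `τ`-invariant because `τ` multiplies
`w₂` and `x` by the same constant, and `ρ` multiplies it by `ω⁻¹ = ω ^ 2`.

The image `F` of `ℂ(S)` in `K` lies in the fixed field of `τ`. It contains `z`, `t₃` and `w₂ ^ 3`,
and `x ∈ F(w₂)`, so `K = F(w₂)` has degree at most `3` over `F`. As `K` has degree exactly `3` over
the fixed field of `τ`, the two fields agree.
-/

section TensorProduct

open TensorProduct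

variable {k A : Type*} [Field k] [IsAlgClosed k] [CommRing A] [IsDomain A] [Algebra k A]
  [Algebra.FiniteType k A]

theorem exists_algHom_apply_ne_zero {a : A} (ha : a ≠ 0) : ∃ φ : A →ₐ[k] k, φ a ≠ 0 := by
  have : IsJacobsonRing A := isJacobsonRing_of_finiteType (A := k)
  have hjac : (⊥ : Ideal A).jacobson = ⊥ := IsJacobsonRing.out' _ Ideal.isRadical_bot
  obtain ⟨m, hm, ham⟩ : ∃ m : Ideal A, m.IsMaximal ∧ a ∉ m := by
    by_contra! h
    exact ha (hjac.le (Ideal.mem_sInf.2 fun {m} hm ↦ h m hm.2))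
  let _ := Ideal.Quotient.field m
  have : Module.Finite k (A ⧸ m) := finite_of_finite_type_of_isJacobsonRing k (A ⧸ m)
  let e := AlgEquiv.ofBijective (Algebra.ofId k (A ⧸ m))
    IsAlgClosed.algebraMap_bijective_of_isIntegral
  refine ⟨(e.symm : A ⧸ m →ₐ[k] k).comp (Ideal.Quotient.mkₐ k m), ?_⟩
  simpa [Ideal.Quotient.eq_zero_iff_mem] using ham

/-- The `k`-algebra homomorphism `φ ⊗ id : A ⊗ B → k ⊗ B ≃ B` that specialises the first factor
at the `k`-point `φ` of `Spec A`. -/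
def specializeLeft {k A : Type*} (B : Type*) [CommRing k] [CommRing A] [Algebra k A]
    [CommRing B] [Algebra k B] (φ : A →ₐ[k] k) : A ⊗[k] B →ₐ[k] B :=
  Algebra.TensorProduct.lift ((Algebra.ofId k B).comp φ) (AlgHom.id k B) fun _ _ ↦ .all _ _

theorem repr_specializeLeft {k A B ι : Type*} [CommRing k] [CommRing A] [Algebra k A]
    [CommRing B] [Algebra k B] (b : Module.Basis ι k B) (φ : A →ₐ[k] k) (x : A ⊗[k] B) (i : ι) :
    b.repr (specializeLeft B φ x) i = φ ((b.baseChange A).repr x i) := by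
  induction x with
  | zero => simp
  | add x y hx hy => simp [hx, hy]
  | tmul x y =>
    have : specializeLeft B φ (x ⊗ₜ y) = φ x • y := by
      simp [specializeLeft, Algebra.ofId_apply, Algebra.smul_def]
    simp [this, mul_comm]

theorem isDomain_tensorProduct (B : Type*) [CommRing B] [IsDomain B] [Algebra k B] :
    IsDomain (A ⊗[k] B) := by
  let b := Module.Free.chooseBasis k B
  have exists_repr_ne_zero {x : A ⊗[k] B} (hx : x ≠ 0) : ∃ i, (b.baseChange A).repr x i ≠ 0 := by
    by_contra! h
    exact hx ((b.baseChange A).repr.map_eq_zero_iff.1 (Finsupp.ext h))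
  have : NoZeroDivisors (A ⊗[k] B) := by
    refine ⟨fun {x y} hxy ↦ ?_⟩
    by_contra! h
    obtain ⟨i, hi⟩ := exists_repr_ne_zero h.1
    obtain ⟨j, hj⟩ := exists_repr_ne_zero h.2
    obtain ⟨φ, hφ⟩ := exists_algHom_apply_ne_zero (k := k) (mul_ne_zero hi hj)
    simp only [map_mul, ← repr_specializeLeft] at hφ
    have hφxy : specializeLeft B φ x * specializeLeft B φ y = 0 := by rw [← map_mul, hxy, map_zero]
    rcases mul_eq_zero.1 hφxy with h0 | h0 <;> simp [h0] at hφ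
  have : Nontrivial (A ⊗[k] B) := inferInstance
  exact NoZeroDivisors.to_isDomain _

theorem isPrime_map_includeLeft_sup_map_includeRight {A B : Type*} [CommRing A] [Algebra k A]
    [Algebra.FiniteType k A] [CommRing B] [Algebra k B] (I : Ideal A) (J : Ideal B) [I.IsPrime]
    [J.IsPrime] :
    (I.map (Algebra.TensorProduct.includeLeft : A →ₐ[k] A ⊗[k] B) ⊔
      J.map (Algebra.TensorProduct.includeRight : B →ₐ[k] A ⊗[k] B)).IsPrime := by
  have : IsDomain ((A ⧸ I) ⊗[k] (B ⧸ J)) := isDomain_tensorProduct (B ⧸ J)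
  have hker := Algebra.TensorProduct.map_ker (Ideal.Quotient.mkₐ k I) (Ideal.Quotient.mkₐ k J)
    (Ideal.Quotient.mkₐ_surjective k I) (Ideal.Quotient.mkₐ_surjective k J)
  have hI : RingHom.ker (Ideal.Quotient.mkₐ k I) = I := Ideal.Quotient.mkₐ_ker k I
  have hJ : RingHom.ker (Ideal.Quotient.mkₐ k J) = J := Ideal.Quotient.mkₐ_ker k J
  rw [hI, hJ] at hker
  exact hker ▸ RingHom.ker_isPrime _

theorem isPrime_map_rename_sup_map_rename {σ τ ι : Type*} [Finite σ]
    (I : Ideal (MvPolynomial σ k)) (J : Ideal (MvPolynomial τ k)) [I.IsPrime] [J.IsPrime]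
    {f : σ → ι} {g : τ → ι} (hfg : Function.Bijective (Sum.elim f g)) :
    (I.map (rename (R := k) f) ⊔ J.map (rename (R := k) g)).IsPrime := by
  let e : MvPolynomial σ k ⊗[k] MvPolynomial τ k ≃ₐ[k] MvPolynomial ι k :=
    (tensorEquivSum k σ τ k).trans (renameEquiv k (.ofBijective _ hfg))
  have e_left : e.toAlgHom.comp Algebra.TensorProduct.includeLeft = rename f := by
    ext i; simp [e]
  have e_right : e.toAlgHom.comp Algebra.TensorProduct.includeRight = rename g := by
    ext i; simp [e]
  rw [← e_left, ← e_right, ← Ideal.map_mapₐ, ← Ideal.map_mapₐ, ← Ideal.map_sup]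
  have := isPrime_map_includeLeft_sup_map_includeRight (k := k) I J
  exact Ideal.map_isPrime_of_equiv e

end TensorProduct

section Eisenstein

theorem prime_C_mul_X_pow_sub_C {R : Type*} [CommRing R] [IsDomain R]
    [UniqueFactorizationMonoid R] {p q r : R} {n : ℕ} (hn : n ≠ 0) (hp : Prime p) (hpr : ¬ p ∣ r)
    (hq : IsRelPrime q (p * r)) :
    Prime (Polynomial.C q * Polynomial.X ^ n - Polynomial.C (p * r)) := by
  set f := Polynomial.C q * Polynomial.X ^ n - Polynomial.C (p * r)
  have hpq : ¬ p ∣ q := fun h ↦ hp.not_isUnit (hq h (dvd_mul_right p r))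
  have hq0 : q ≠ 0 := fun h ↦ hpq (h ▸ dvd_zero p)
  have hlt : (Polynomial.C (p * r)).degree < (Polynomial.C q * Polynomial.X ^ n).degree := by
    rw [Polynomial.degree_C_mul_X_pow n hq0]
    exact Polynomial.degree_C_le.trans_lt (by exact_mod_cast Nat.pos_of_ne_zero hn)
  have hdeg : f.degree = n := by
    rw [Polynomial.degree_sub_eq_left_of_degree_lt hlt, Polynomial.degree_C_mul_X_pow n hq0]
  have coeff_zero : f.coeff 0 = -(p * r) := by simp [f, hn.symm]
  have coeff_n : f.coeff n = q := by simp [f, Polynomial.coeff_C_of_ne_zero hn]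
  have hprime := (Ideal.span_singleton_prime hp.ne_zero).2 hp
  refine (Polynomial.irreducible_of_eisenstein_criterion hprime ?_ (fun m hm ↦ ?_) ?_ ?_ ?_).prime
  · rw [Polynomial.leadingCoeff, Polynomial.natDegree_eq_of_degree_eq_some hdeg, coeff_n]
    exact mt Ideal.mem_span_singleton.1 hpq
  · have hmn : m ≠ n := by rintro rfl; exact hm.ne hdeg.symm
    rcases eq_or_ne m 0 with rfl | hm0
    · simp [coeff_zero, Ideal.mem_span_singleton]
    · simp [f, Polynomial.coeff_X_pow, hmn, Polynomial.coeff_C_of_ne_zero hm0]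
  · simpa [hdeg] using Nat.pos_of_ne_zero hn
  · rw [coeff_zero, Ideal.span_singleton_pow, Ideal.mem_span_singleton, dvd_neg, pow_two,
      mul_dvd_mul_iff_left hp.ne_zero]
    exact hpr
  · intro d hd
    rw [Polynomial.C_dvd_iff_dvd_coeff] at hd
    exact hq (coeff_n ▸ hd n) (dvd_neg.1 (coeff_zero ▸ hd 0))

variable {k : Type*} [Field k] {m n : ℕ}

theorem prime_rename_succ_mul_X_zero_pow_sub {p q r : MvPolynomial (Fin m) k} (hn : n ≠ 0)
    (hp : Prime p) (hpr : ¬ p ∣ r) (hq : IsRelPrime q (p * r)) :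
    Prime (rename Fin.succ q * X 0 ^ n - rename Fin.succ (p * r)) := by
  have finSuccEquiv_rename (f : MvPolynomial (Fin m) k) :
      finSuccEquiv k m (rename Fin.succ f) = Polynomial.C f := by
    induction f using MvPolynomial.induction_on with
    | C a => simp [finSuccEquiv_apply]
    | add f g hf hg => simp [hf, hg]
    | mul_X f i hf => simp [hf, finSuccEquiv_X_succ]
  rw [← MulEquiv.prime_iff (finSuccEquiv k m)]
  simp only [map_sub, map_mul _ (rename Fin.succ q), map_pow, finSuccEquiv_rename,
    finSuccEquiv_X_zero]
  exact prime_C_mul_X_pow_sub_C hn hp hpr hq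

theorem prime_X_pow_sub_aeval {p : Polynomial k} {r : k} (hn : n ≠ 0) (hp : p.IsRoot r)
    (hp' : ¬ p.derivative.IsRoot r) :
    Prime (X 0 ^ n - Polynomial.aeval (X 1) p : MvPolynomial (Fin 2) k) := by
  obtain ⟨q, rfl⟩ := Polynomial.dvd_iff_isRoot.2 hp
  let e : Polynomial k ≃ₐ[k] MvPolynomial (Fin 1) k := (uniqueAlgEquiv k (Fin 1)).symm
  have rename_e (f : Polynomial k) : rename Fin.succ (e f) = Polynomial.aeval (X 1) f := by
    have : (rename Fin.succ).comp e.toAlgHom = Polynomial.aeval (X 1) := by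
      ext; simp [e]
    exact congr($this f)
  have hq : ¬ (Polynomial.X - Polynomial.C r) ∣ q := by
    simpa [Polynomial.dvd_iff_isRoot] using hp'
  have := prime_rename_succ_mul_X_zero_pow_sub (q := 1) hn
    ((MulEquiv.prime_iff e).2 (Polynomial.prime_X_sub_C r))
    (mt (map_dvd_iff e).1 hq) isRelPrime_one_left
  rwa [← map_mul, rename_e, map_one, one_mul] at this

theorem isRelPrime_X_of_eval_ne_zero {σ : Type*} {i : σ} {p : MvPolynomial σ k}
    {y : σ → k} (hy : y i = 0) (hp : eval y p ≠ 0) : IsRelPrime p (X i) := by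
  refine IsRelPrime.symm (X_prime.irreducible.isRelPrime_iff_not_dvd.2 ?_)
  rintro ⟨q, rfl⟩
  simp [hy] at hp

end Eisenstein

section Transcendence

open scoped IntermediateField.algebraAdjoinAdjoin

variable {k : Type*} [Field k] {κ : Type*}

theorem algebraicIndependent_of_adjoin_range_eq_top {K : Type*} [Finite κ] [Field K] [Algebra k K]
    {x y : κ → K} (hx : AlgebraicIndependent k x)
    (hy : IntermediateField.adjoin k (Set.range y) = ⊤) : AlgebraicIndependent k y := by
  have : Algebra.IsAlgebraic (IntermediateField.adjoin k (Set.range y)) K := by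
    rw [hy]; exact ⟨fun z ↦ isAlgebraic_algebraMap (⟨z, trivial⟩ : (⊤ : IntermediateField k K))⟩
  have : Algebra.IsAlgebraic (Algebra.adjoin k (Set.range y)) K :=
    .trans _ (IntermediateField.adjoin k (Set.range y)) _
  exact (Algebra.IsAlgebraic.isTranscendenceBasis_of_lift_le_trdeg_of_finite k y
    hx.lift_cardinalMk_le_trdeg).1

theorem algebraicIndependent_of_mem_adjoin_range {K : Type*} [Finite κ] [Field K] [Algebra k K]
    {x y : κ → K} (hx : AlgebraicIndependent k x)
    (hxy : ∀ j, x j ∈ IntermediateField.adjoin k (Set.range y)) : AlgebraicIndependent k y := by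
  let F := IntermediateField.adjoin k (Set.range y)
  let y' : κ → F := fun j ↦ ⟨y j, IntermediateField.subset_adjoin k _ ⟨j, rfl⟩⟩
  let x' : κ → F := fun j ↦ ⟨x j, hxy j⟩
  have hx' : AlgebraicIndependent k x' := .of_comp F.val hx
  have hF : IntermediateField.adjoin k (Set.range y') = ⊤ := by
    refine IntermediateField.map_injective F.val ?_
    rw [IntermediateField.adjoin_map, ← Set.range_comp, ← AlgHom.fieldRange_eq_map,
      IntermediateField.fieldRange_val]
    rfl
  have hy' := algebraicIndependent_of_adjoin_range_eq_top hx' hF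
  exact AlgebraicIndependent.map' (f := F.val) hy' F.val.injective

theorem injective_of_algebraicIndependent_comp {A B : Type*} [CommRing A] [IsDomain A] [Algebra k A]
    [CommRing B] [Algebra k B] (f : A →ₐ[k] B) {x : κ → A}
    [Algebra.IsAlgebraic (Algebra.adjoin k (Set.range x)) A]
    (hx : AlgebraicIndependent k (f ∘ x)) : Function.Injective f := by
  let R := Algebra.adjoin k (Set.range x)
  have hR : Function.Injective (f.comp R.val) := by
    rw [injective_iff_map_eq_zero]
    rintro ⟨r, hr⟩ hfr
    obtain ⟨p, rfl⟩ := (Algebra.adjoin_range_eq_range_aeval k x).le hr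
    have hp : aeval (f ∘ x) p = 0 := (comp_aeval_apply x f p).symm.trans hfr
    exact Subtype.ext (by simp [hx.eq_zero_of_aeval_eq_zero p hp])
  algebraize [f.toRingHom]
  exact Algebra.IsAlgebraic.injective_tower_top (R := R) A hR

theorem isAlgebraic_quotient {ι : Type*} (I : Ideal (MvPolynomial ι k))
    {R : Subalgebra k (MvPolynomial ι k ⧸ I)} [IsDomain R]
    (h : ∀ i, IsAlgebraic R (Ideal.Quotient.mkₐ k I (X i))) :
    Algebra.IsAlgebraic R (MvPolynomial ι k ⧸ I) := by
  refine ⟨fun y ↦ ?_⟩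
  obtain ⟨p, rfl⟩ := Ideal.Quotient.mk_surjective y
  induction p using MvPolynomial.induction_on with
  | C a => exact isAlgebraic_algebraMap (algebraMap k R a)
  | add p q hp hq => simpa using hp.add hq
  | mul_X p i hp => simpa using hp.mul (h i)

end Transcendence

section FunctionField

variable {k ι : Type*} [Field k] (I : Ideal (MvPolynomial ι k))

/-- The function field of the affine variety defined by the ideal `I`: the ring of fractions of
`k[X] ⧸ I`, which is a field as soon as `I` is prime. -/
abbrev AffineFunctionField : Type _ := FractionRing (MvPolynomial ι k ⧸ I)

/-- The class of a polynomial in the function field of the affine variety defined by `I`. -/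
def toFunctionField : MvPolynomial ι k →ₐ[k] AffineFunctionField I :=
  (IsScalarTower.toAlgHom k (MvPolynomial ι k ⧸ I) (AffineFunctionField I)).comp
    (Ideal.Quotient.mkₐ k I)

variable {I}

theorem toFunctionField_eq_zero_iff [I.IsPrime] {p : MvPolynomial ι k} :
    toFunctionField I p = 0 ↔ p ∈ I := by
  simp [toFunctionField, Ideal.Quotient.eq_zero_iff_mem]

theorem toFunctionField_eq_iff [I.IsPrime] {p q : MvPolynomial ι k} :
    toFunctionField I p = toFunctionField I q ↔ p - q ∈ I := by
  rw [← sub_eq_zero, ← map_sub, toFunctionField_eq_zero_iff]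

theorem adjoin_range_toFunctionField_X [I.IsPrime] :
    IntermediateField.adjoin k (Set.range fun i ↦ toFunctionField I (X i)) = ⊤ := by
  set E := IntermediateField.adjoin k (Set.range fun i ↦ toFunctionField I (X i))
  have mem_E (p : MvPolynomial ι k) : toFunctionField I p ∈ E := by
    induction p using MvPolynomial.induction_on with
    | C r => simp [← algebraMap_eq]
    | add p q hp hq => simpa using add_mem hp hq
    | mul_X p i hp => simpa using mul_mem hp (IntermediateField.subset_adjoin k _ ⟨i, rfl⟩)
  refine eq_top_iff.2 fun y _ ↦ ?_
  obtain ⟨p, q, -, rfl⟩ := IsFractionRing.div_surjective (MvPolynomial ι k ⧸ I) y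
  obtain ⟨p, rfl⟩ := Ideal.Quotient.mk_surjective p
  obtain ⟨q, rfl⟩ := Ideal.Quotient.mk_surjective q
  exact div_mem (mem_E p) (mem_E q)

theorem algHom_functionField_ext [I.IsPrime] {K : Type*} [Field K] [Algebra k K]
    {f g : AffineFunctionField I →ₐ[k] K}
    (h : ∀ i, f (toFunctionField I (X i)) = g (toFunctionField I (X i))) : f = g :=
  AlgHom.ext fun y ↦ IntermediateField.adjoin_induction k (p := fun y _ ↦ f y = g y)
    (Set.forall_mem_range.2 h) (by simp) (fun _ _ _ _ hx hy ↦ by simp [hx, hy])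
    (fun _ _ hx ↦ by simp [hx]) (fun _ _ _ _ hx hy ↦ by simp [hx, hy])
    (adjoin_range_toFunctionField_X.ge IntermediateField.mem_top : y ∈ _)

theorem algebraicIndependent_toFunctionField_X [Infinite k] [I.IsPrime] {κ : Type*} {s : κ → ι}
    (h : ∀ y : κ → k, ∃ x : ι → k, x ∘ s = y ∧ ∀ p ∈ I, eval x p = 0) :
    AlgebraicIndependent k fun j ↦ toFunctionField I (X (s j)) := by
  rw [algebraicIndependent_iff]
  intro p hp
  have hpI : rename s p ∈ I := by
    rw [← toFunctionField_eq_zero_iff, ← hp, ← AlgHom.comp_apply]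
    congr 1
    ext j
    simp
  refine MvPolynomial.funext fun y ↦ ?_
  obtain ⟨x, rfl, hx⟩ := h y
  rw [← eval_rename, hx _ hpI, map_zero]

/-- The automorphism `X i ↦ e i * X i` of the polynomial ring. -/
def scaleX (e : ι → kˣ) : MvPolynomial ι k ≃ₐ[k] MvPolynomial ι k :=
  .ofAlgHom (aeval fun i ↦ e i • X i) (aeval fun i ↦ (e i)⁻¹ • X i)
    (by ext i; simp [Units.smul_def]) (by ext i; simp [Units.smul_def])

theorem scaleX_X (e : ι → kˣ) (i : ι) : scaleX e (X i) = e i • X i := by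
  simp [scaleX]

theorem scaleX_C (e : ι → kˣ) (r : k) : scaleX e (C r) = C r :=
  (scaleX e).commutes r

theorem map_scaleX_span {e : ι → kˣ} {S : Set (MvPolynomial ι k)} (h : ∀ p ∈ S, scaleX e p = p) :
    (Ideal.span S).map (scaleX e : MvPolynomial ι k →+* MvPolynomial ι k) = Ideal.span S := by
  rw [Ideal.map_span]
  congr 1
  exact (Set.image_congr h).trans (Set.image_id' S)

/-- The automorphism `X i ↦ e i * X i` of the function field of a variety stable under it. -/
def scaleFunctionField {e : ι → kˣ}
    (h : I.map (scaleX e : MvPolynomial ι k →+* MvPolynomial ι k) = I) :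
    AffineFunctionField I ≃ₐ[k] AffineFunctionField I :=
  IsFractionRing.algEquivOfAlgEquiv (Ideal.quotientEquivAlg I I (scaleX e) h.symm)

theorem scaleFunctionField_X {e : ι → kˣ}
    (h : I.map (scaleX e : MvPolynomial ι k →+* MvPolynomial ι k) = I) (i : ι) :
    scaleFunctionField h (toFunctionField I (X i)) = (e i : k) • toFunctionField I (X i) := by
  have : scaleFunctionField h (toFunctionField I (X i)) = toFunctionField I (scaleX e (X i)) :=
    IsFractionRing.algEquivOfAlgEquiv_algebraMap _ _
  rw [this, scaleX_X, Units.smul_def, map_smul]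

theorem orderOf_scaleFunctionField [I.IsPrime] {e : ι → kˣ}
    (h : I.map (scaleX e : MvPolynomial ι k →+* MvPolynomial ι k) = I) {p : ℕ} [Fact p.Prime]
    (he : ∀ i, e i ^ p = 1) {i : ι} (hi : e i ≠ 1) (hX : X i ∉ I) :
    orderOf (scaleFunctionField h) = p := by
  have pow_apply (n : ℕ) (i : ι) : (scaleFunctionField h ^ n) (toFunctionField I (X i)) =
      ((e i ^ n : kˣ) : k) • toFunctionField I (X i) := by
    induction n with
    | zero => simp
    | succ n ih => rw [pow_succ, AlgEquiv.mul_apply, scaleFunctionField_X, map_smul, ih, smul_smul,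
        ← Units.val_mul, ← pow_succ']
  refine orderOf_eq_prime ?_ fun h1 ↦ hi ?_
  · exact AlgEquiv.coe_toAlgHom_injective
      (algHom_functionField_ext fun i ↦ by simp [pow_apply, he])
  · have hsmul : (e i : k) • toFunctionField I (X i) = (1 : k) • toFunctionField I (X i) := by
      rw [← scaleFunctionField_X h, h1, AlgEquiv.one_apply, one_smul]
    rw [Algebra.smul_def, Algebra.smul_def] at hsmul
    exact Units.ext ((algebraMap k (AffineFunctionField I)).injective
      (mul_right_cancel₀ (mt toFunctionField_eq_zero_iff.1 hX) hsmul))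

end FunctionField

section FixedField

open IntermediateField

variable {k K : Type*} [Field k] [Field K] [Algebra k K]

theorem finiteDimensional_and_finrank_le_of_pow_mem {F : IntermediateField k K} {w : K}
    {n : ℕ} (hn : n ≠ 0) (hw : w ^ n ∈ F) (hFw : F⟮w⟯ = ⊤) :
    FiniteDimensional F K ∧ Module.finrank F K ≤ n := by
  let p : Polynomial F := Polynomial.X ^ n - Polynomial.C ⟨w ^ n, hw⟩
  have hp : p.Monic := Polynomial.monic_X_pow_sub_C _ hn
  have hpw : Polynomial.aeval w p = 0 := by simp [p, IntermediateField.algebraMap_apply]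
  have hint : IsIntegral F w := ⟨p, hp, hpw⟩
  have := adjoin.finiteDimensional hint
  rw [hFw] at this
  refine ⟨.of_surjective (⊤ : IntermediateField F K).val.toLinearMap
    fun y ↦ ⟨⟨y, trivial⟩, rfl⟩, ?_⟩
  rw [← finrank_top', ← hFw, adjoin.finrank hint]
  exact (Polynomial.natDegree_le_of_dvd (minpoly.dvd F w hpw) hp.ne_zero).trans_eq
    (Polynomial.natDegree_X_pow_sub_C)

theorem mem_of_pow_orderOf_mem {F : IntermediateField k K} {σ : K ≃ₐ[k] K} (hσ : orderOf σ ≠ 0)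
    (hF : ∀ y ∈ F, σ y = y) {w : K} (hw : w ^ orderOf σ ∈ F) (hFw : F⟮w⟯ = ⊤) {y : K}
    (hy : σ y = y) : y ∈ F := by
  have : Finite (Subgroup.zpowers σ) := (orderOf_pos_iff.1 (Nat.pos_of_ne_zero hσ)).finite_zpowers
  have := Fintype.ofFinite (Subgroup.zpowers σ)
  let E : IntermediateField k K := FixedPoints.intermediateField (Subgroup.zpowers σ)
  have mem_E {y : K} (hy : σ y = y) : y ∈ E := fun g ↦
    (Subgroup.zpowers_le (H := MulAction.stabilizer (K ≃ₐ[k] K) y)).2 hy g.2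
  have hcard : Module.finrank E K = orderOf σ := by
    rw [← Nat.card_zpowers, Nat.card_eq_fintype_card]
    exact FixedPoints.finrank_eq_card (Subgroup.zpowers σ) K
  obtain ⟨_, hle⟩ := finiteDimensional_and_finrank_le_of_pow_mem hσ hw hFw
  have hFE : F = E := eq_of_le_of_finrank_le' (fun y hy ↦ mem_E (hF y hy)) (hle.trans_eq hcard.symm)
  exact hFE ▸ mem_E hy

theorem exists_algEquiv_equalizer {E : Type*} [Field E] [Algebra k E] {f : E →ₐ[k] K}
    {σ : K ≃ₐ[k] K} (hσf : ∀ s, σ (f s) = f s) (hf : ∀ y, σ y = y → y ∈ f.fieldRange) :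
    ∃ φ : E ≃ₐ[k] AlgHom.equalizer σ.toAlgHom (AlgHom.id k K), ∀ s, (φ s : K) = f s := by
  let g := f.codRestrict (AlgHom.equalizer σ.toAlgHom (AlgHom.id k K)) hσf
  refine ⟨.ofBijective g ⟨fun x y hxy ↦ f.injective congr(($hxy : K)), fun ⟨y, hy⟩ ↦ ?_⟩,
    fun s ↦ rfl⟩
  obtain ⟨s, rfl⟩ := hf y hy
  exact ⟨s, rfl⟩

end FixedField

section FunctionFieldMaps

variable {k K ι κ : Type*} [Field k] [Field K] [Algebra k K] {I : Ideal (MvPolynomial ι k)}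
  [I.IsPrime]

theorem exists_algHom_functionField {x : ι → K} (hI : ∀ p ∈ I, aeval x p = 0) {s : κ → ι}
    (hx : AlgebraicIndependent k (x ∘ s))
    (hs : ∀ i, IsAlgebraic (Algebra.adjoin k (Set.range fun j ↦ Ideal.Quotient.mkₐ k I (X (s j))))
      (Ideal.Quotient.mkₐ k I (X i))) :
    ∃ f : AffineFunctionField I →ₐ[k] K, ∀ i, f (toFunctionField I (X i)) = x i := by
  let g : MvPolynomial ι k ⧸ I →ₐ[k] K := Ideal.Quotient.liftₐ I (aeval x) hI
  have g_X (i : ι) : g (Ideal.Quotient.mkₐ k I (X i)) = x i :=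
    (Ideal.Quotient.liftₐ_apply I _ hI _).trans (aeval_X x i)
  have := isAlgebraic_quotient I hs
  have hg : Function.Injective g := injective_of_algebraicIndependent_comp g
    (x := fun j ↦ Ideal.Quotient.mkₐ k I (X (s j)))
    (by simpa only [Function.comp_def, g_X] using hx)
  exact ⟨IsFractionRing.liftAlgHom hg, fun i ↦ (IsFractionRing.lift_algebraMap hg _).trans (g_X i)⟩

theorem isAlgebraic_of_pow_mul_mem {A : Type*} [CommRing A] [IsDomain A] [Algebra k A]
    {R : Subalgebra k A} {y q : A} {n : ℕ} (hn : 0 < n) (hq : q ∈ R) (hq0 : q ≠ 0)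
    (hy : y ^ n * q ∈ R) : IsAlgebraic R y := by
  refine .of_pow hn (.of_mul (mem_nonZeroDivisors_of_ne_zero hq0)
    (isAlgebraic_algebraMap (⟨q, hq⟩ : R)) ?_)
  rw [mul_comm]
  exact isAlgebraic_algebraMap (⟨_, hy⟩ : R)

end FunctionFieldMaps

section Parametrisation

open scoped algebraMap
open IntermediateField

variable {k K : Type*} [Field k] [Field K] [Algebra k K]

theorem aeval_ne_zero_of_eval_ne_zero {R A ι : Type*} [CommRing R] [CommRing A] [Algebra R A]
    {y : ι → A} (hy : AlgebraicIndependent R y) {p : MvPolynomial ι R} {s : ι → R}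
    (hp : eval s p ≠ 0) : aeval y p ≠ 0 :=
  fun h ↦ hp (by rw [hy.eq_zero_of_aeval_eq_zero p h, map_zero])

/-- The rational function `u` on `C₁ × F₁`. It comes from the parametrisation by `t` of the
line `v₁ = z * u₁`, which has the equation `(b - z) * u - (z - c) * v = z - a`. -/
def uCoord (a b : k) (z t : K) : K := (z - a) * (t + 1) / (b - z)

/-- The rational function `v` on `C₁ × F₁`, from the same parametrisation as `uCoord`. -/
def vCoord (a c : k) (z t : K) : K := (z - a) * t / (z - c)

/-- The rational function `u₁ = 1 + u + v` on `C₁ × F₁`. -/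
def u₁Coord (a b c : k) (z t : K) : K := 1 + uCoord a b z t + vCoord a c z t

/-- The rational function `w` on `C₁ × F₁`. The equation of `S` reads
`((b - c) * w₂ * u₁ * w) ^ 3 = ((z - a) * x) ^ 3`, and this is the solution without a root of
unity. -/
def wCoord (a b c : k) (z w t x : K) : K := (z - a) * x / ((b - c) * w * u₁Coord a b c z t)

/-- The rational map `(w, u, v)` from `C₁ × F₁` to the surface `S`. -/
def surfaceCoord (a b c : k) (z w t x : K) : Fin 3 → K :=
  ![wCoord a b c z w t x, uCoord a b z t, vCoord a c z t]

/-- The elements `z, w, t, x` are coordinates on `C₁ × F₁` with function field `K`. The equation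
of `C₁` is stated with the denominator `(b - c) ^ 3` of `P` cleared. -/
structure IsProductCoord (a b c : k) (z w t x : K) : Prop where
  algebraicIndependent : AlgebraicIndependent k ![z, t]
  w_pow : w ^ 3 * (b - c) ^ 3 = z * (z - 1) * (b - z) * (z - c) * (z - a)
  x_pow : x ^ 3 = t * (t + 1)
  adjoin_eq_top : adjoin k {z, w, t, x} = ⊤

namespace IsProductCoord

variable {a b c : k} {z w t x : K}

theorem z_sub_ne_zero (h : IsProductCoord a b c z w t x) (r : k) : z - r ≠ 0 := by
  have hp : eval ![r + 1, 0] (X 0 - C r) ≠ 0 := by simp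
  simpa using aeval_ne_zero_of_eval_ne_zero h.algebraicIndependent hp

theorem sub_z_ne_zero (h : IsProductCoord a b c z w t x) (r : k) : r - z ≠ 0 :=
  neg_sub z (r : K) ▸ neg_ne_zero.2 (h.z_sub_ne_zero r)

theorem w_pow_mul_ne_zero (h : IsProductCoord a b c z w t x) : w ^ 3 * (b - c) ^ 3 ≠ 0 := by
  have h0 : z ≠ 0 := by simpa using h.z_sub_ne_zero 0
  have h1 : z - 1 ≠ 0 := by simpa using h.z_sub_ne_zero 1
  simp [h.w_pow, h0, h1, h.z_sub_ne_zero, h.sub_z_ne_zero]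

theorem w_ne_zero (h : IsProductCoord a b c z w t x) : w ≠ 0 := by
  rintro rfl
  simpa using h.w_pow_mul_ne_zero

theorem b_sub_c_ne_zero (h : IsProductCoord a b c z w t x) : (b - c : K) ≠ 0 := fun hbc ↦ by
  simpa [hbc] using h.w_pow_mul_ne_zero

theorem u₁Coord_ne_zero (h : IsProductCoord a b c z w t x) (hab : a ≠ b) (hac : a ≠ c) :
    u₁Coord a b c z t ≠ 0 := by
  let p : MvPolynomial (Fin 2) k :=
    (X 0 - C a) * X 1 * (C b - C c) + (X 0 - C c) * (C b - C a)
  have hp : eval ![a, 0] p ≠ 0 := by simp [p, sub_eq_zero, hab.symm, hac]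
  have hu₁ : u₁Coord a b c z t * ((b - z) * (z - c)) = aeval ![z, t] p := by
    have := h.sub_z_ne_zero b
    have := h.z_sub_ne_zero c
    simp only [u₁Coord, uCoord, vCoord, p, map_add, map_mul, map_sub, aeval_X, aeval_C,
      Matrix.cons_val_zero, Matrix.cons_val_one]
    field_simp
    ring
  exact left_ne_zero_of_mul (hu₁ ▸ aeval_ne_zero_of_eval_ne_zero h.algebraicIndependent hp)

theorem add_mul_uCoord_add_mul_vCoord (h : IsProductCoord a b c z w t x) :
    a + b * uCoord a b z t + c * vCoord a c z t = z * u₁Coord a b c z t := by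
  have := h.sub_z_ne_zero b
  have := h.z_sub_ne_zero c
  simp only [u₁Coord, uCoord, vCoord]
  field_simp
  ring

theorem wCoord_mul_w (h : IsProductCoord a b c z w t x) (hab : a ≠ b) (hac : a ≠ c) :
    wCoord a b c z w t x * ((b - c) * w * u₁Coord a b c z t) = (z - a) * x :=
  div_mul_cancel₀ _
    (mul_ne_zero (mul_ne_zero h.b_sub_c_ne_zero h.w_ne_zero) (h.u₁Coord_ne_zero hab hac))

theorem surface_equation (h : IsProductCoord a b c z w t x) (hab : a ≠ b) (hac : a ≠ c) :
    wCoord a b c z w t x ^ 3 * u₁Coord a b c z t * (z * u₁Coord a b c z t) *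
      (z * u₁Coord a b c z t - u₁Coord a b c z t) = uCoord a b z t * vCoord a c z t := by
  have hu : uCoord a b z t * (b - z) = (z - a) * (t + 1) := div_mul_cancel₀ _ (h.sub_z_ne_zero b)
  have hv : vCoord a c z t * (z - c) = (z - a) * t := div_mul_cancel₀ _ (h.z_sub_ne_zero c)
  have hW := congr($(h.wCoord_mul_w hab hac) ^ 3)
  generalize wCoord a b c z w t x = W, u₁Coord a b c z t = u₁, uCoord a b z t = u,
    vCoord a c z t = v at *
  refine mul_right_cancel₀ h.w_pow_mul_ne_zero ?_
  calc W ^ 3 * u₁ * (z * u₁) * (z * u₁ - u₁) * (w ^ 3 * (b - c) ^ 3)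
    _ = (W * ((b - c) * w * u₁)) ^ 3 * (z * (z - 1)) := by ring
    _ = (z - a) ^ 3 * (t * (t + 1)) * (z * (z - 1)) := by rw [hW, mul_pow, h.x_pow]
    _ = (u * (b - z)) * (v * (z - c)) * (z * (z - 1) * (z - a)) := by rw [hu, hv]; ring
    _ = u * v * (w ^ 3 * (b - c) ^ 3) := by rw [h.w_pow]; ring

theorem z_mem {F : IntermediateField k K} (h : IsProductCoord a b c z w t x) (hab : a ≠ b)
    (hac : a ≠ c) (hu : uCoord a b z t ∈ F) (hv : vCoord a c z t ∈ F) : z ∈ F := by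
  have hz := eq_div_of_mul_eq (h.u₁Coord_ne_zero hab hac) h.add_mul_uCoord_add_mul_vCoord.symm
  rw [hz]
  have hk (r : k) : (r : K) ∈ F := F.algebraMap_mem r
  exact div_mem (add_mem (add_mem (hk a) (mul_mem (hk b) hu)) (mul_mem (hk c) hv))
    (add_mem (add_mem F.one_mem hu) hv)

theorem t_mem {F : IntermediateField k K} (h : IsProductCoord a b c z w t x)
    (hz : z ∈ F) (hv : vCoord a c z t ∈ F) : t ∈ F := by
  have ht : t = vCoord a c z t * (z - c) / (z - a) := by
    have := h.z_sub_ne_zero a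
    have := h.z_sub_ne_zero c
    rw [vCoord]
    field_simp
  rw [ht]
  exact div_mem (mul_mem hv (sub_mem hz (F.algebraMap_mem c))) (sub_mem hz (F.algebraMap_mem a))

theorem algebraicIndependent_uCoord_vCoord (h : IsProductCoord a b c z w t x) (hab : a ≠ b)
    (hac : a ≠ c) : AlgebraicIndependent k ![uCoord a b z t, vCoord a c z t] := by
  have hu : uCoord a b z t ∈ adjoin k (Set.range ![uCoord a b z t, vCoord a c z t]) :=
    subset_adjoin k _ ⟨0, rfl⟩
  have hv : vCoord a c z t ∈ adjoin k (Set.range ![uCoord a b z t, vCoord a c z t]) :=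
    subset_adjoin k _ ⟨1, rfl⟩
  have hz := h.z_mem hab hac hu hv
  refine algebraicIndependent_of_mem_adjoin_range h.algebraicIndependent fun j ↦ ?_
  fin_cases j
  exacts [hz, h.t_mem hz hv]

theorem w_pow_mem {F : IntermediateField k K} (h : IsProductCoord a b c z w t x) (hz : z ∈ F) :
    w ^ 3 ∈ F := by
  have sub_mem_F (r : k) : z - r ∈ F := sub_mem hz (F.algebraMap_mem r)
  have hP : z * (z - 1) * (b - z) * (z - c) * (z - a) ∈ F :=
    mul_mem (mul_mem (mul_mem (mul_mem hz (sub_mem hz F.one_mem))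
      (sub_mem (F.algebraMap_mem b) hz)) (sub_mem_F c)) (sub_mem_F a)
  rw [eq_div_of_mul_eq (pow_ne_zero 3 h.b_sub_c_ne_zero) h.w_pow]
  exact div_mem hP (pow_mem (sub_mem (F.algebraMap_mem b) (F.algebraMap_mem c)) 3)

theorem x_mem {F : IntermediateField k K} (h : IsProductCoord a b c z w t x) (hab : a ≠ b)
    (hac : a ≠ c) (hz : z ∈ F) (hw : w ∈ F) (hu₁ : u₁Coord a b c z t ∈ F)
    (hW : wCoord a b c z w t x ∈ F) : x ∈ F := by
  rw [eq_div_of_mul_eq (h.z_sub_ne_zero a) ((mul_comm _ _).trans (h.wCoord_mul_w hab hac).symm)]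
  have hbc : (b - c : K) ∈ F := sub_mem (F.algebraMap_mem b) (F.algebraMap_mem c)
  exact div_mem (mul_mem hW (mul_mem (mul_mem hbc hw) hu₁)) (sub_mem hz (F.algebraMap_mem a))

theorem mem_of_apply_eq {F : IntermediateField k K} (h : IsProductCoord a b c z w t x)
    (hab : a ≠ b) (hac : a ≠ c) (hu : uCoord a b z t ∈ F) (hv : vCoord a c z t ∈ F)
    (hW : wCoord a b c z w t x ∈ F) {σ : K ≃ₐ[k] K} (hσ : orderOf σ = 3) (hF : ∀ y ∈ F, σ y = y)
    {y : K} (hy : σ y = y) : y ∈ F := by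
  have hz := h.z_mem hab hac hu hv
  have ht := h.t_mem hz hv
  refine mem_of_pow_orderOf_mem (hσ ▸ three_ne_zero) hF (hσ ▸ h.w_pow_mem hz) ?_ hy
  let E : IntermediateField k K := F⟮w⟯.restrictScalars k
  have le_E {y : K} (hy : y ∈ F) : y ∈ E := F⟮w⟯.algebraMap_mem ⟨y, hy⟩
  have hw : w ∈ E := mem_adjoin_simple_self F w
  have hx : x ∈ E := h.x_mem hab hac (le_E hz) hw (le_E (add_mem (add_mem F.one_mem hu) hv))
    (le_E hW)
  have hle : adjoin k {z, w, t, x} ≤ E := by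
    simp [adjoin_le_iff, Set.insert_subset_iff, le_E hz, le_E ht, hw, hx]
  exact restrictScalars_injective k (top_unique (h.adjoin_eq_top ▸ hle))

end IsProductCoord

section Map

variable {a b c : k} {z w t x : K} {σ : K →ₐ[k] K}

theorem map_uCoord (hz : σ z = z) (ht : σ t = t) : σ (uCoord a b z t) = uCoord a b z t := by
  simp [uCoord, hz, ht]

theorem map_vCoord (hz : σ z = z) (ht : σ t = t) : σ (vCoord a c z t) = vCoord a c z t := by
  simp [vCoord, hz, ht]

theorem map_wCoord (hz : σ z = z) (ht : σ t = t) {r s : k} (hw : σ w = r • w)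
    (hx : σ x = s • x) : σ (wCoord a b c z w t x) = (s / r) • wCoord a b c z w t x := by
  have hu₁ : σ (u₁Coord a b c z t) = u₁Coord a b c z t := by
    simp [u₁Coord, map_uCoord hz ht, map_vCoord hz ht]
  simp only [wCoord, map_mul, map_sub, AlgHom.commutes, hz, hw, hx, hu₁,
    Algebra.smul_def, div_eq_mul_inv, mul_inv, map_inv₀]
  ring

end Map

end Parametrisation

section Surface

variable {a : ℂ} (b c : ℂ)

theorem isPrime_span_pS (ha0 : a ≠ 0) (ha1 : a ≠ 1) : (Ideal.span {pS a b c}).IsPrime := by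
  let u₁ : MvPolynomial (Fin 2) ℂ := 1 + X 0 + X 1
  let v₁ : MvPolynomial (Fin 2) ℂ := C a + C b * X 0 + C c * X 1
  have hq : eval 0 (u₁ * v₁ * (v₁ - u₁)) ≠ 0 := by simp [u₁, v₁, ha0, sub_ne_zero.2 ha1]
  have hX : ¬ (X 0 : MvPolynomial (Fin 2) ℂ) ∣ X 1 := by simp [X_dvd_X]
  have hrel := (isRelPrime_X_of_eval_ne_zero (i := 0) rfl hq).mul_right
    (isRelPrime_X_of_eval_ne_zero (i := 1) rfl hq)
  have hpS : pS a b c =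
      rename Fin.succ (u₁ * v₁ * (v₁ - u₁)) * X 0 ^ 3 - rename Fin.succ (X 0 * X 1) := by
    simp [pS, u₁S, v₁S, u₁, v₁]
    ring
  have hprime := prime_rename_succ_mul_X_zero_pow_sub three_ne_zero X_prime hX hrel
  rw [hpS]
  exact (Ideal.span_singleton_prime hprime.ne_zero).2 hprime

theorem notMem_span_singleton_of_eval {σ R : Type*} [CommRing R] {p q : MvPolynomial σ R}
    {y : σ → R} (hp : eval y p = 0) (hq : eval y q ≠ 0) : q ∉ Ideal.span {p} := by
  intro h
  obtain ⟨r, rfl⟩ := Ideal.mem_span_singleton.1 h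
  simp [hp] at hq

theorem X_zero_notMem_span_pS (a b c : ℂ) : X 0 ∉ Ideal.span {pS a b c} :=
  notMem_span_singleton_of_eval (y := ![1, 0, -1]) (by simp [pS, u₁S]) (by simp)

theorem isAlgebraic_X_of_span_pS (ha0 : a ≠ 0) (ha1 : a ≠ 1) (i : Fin 3) :
    IsAlgebraic (Algebra.adjoin ℂ (Set.range fun j ↦
      Ideal.Quotient.mkₐ ℂ (Ideal.span {pS a b c}) (X (![1, 2] j))))
      (Ideal.Quotient.mkₐ ℂ (Ideal.span {pS a b c}) (X i)) := by
  have := isPrime_span_pS b c ha0 ha1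
  set π := Ideal.Quotient.mkₐ ℂ (Ideal.span {pS a b c})
  set R := Algebra.adjoin ℂ (Set.range fun j ↦ π (X (![1, 2] j)))
  have hu : π (X 1) ∈ R := Algebra.subset_adjoin ⟨0, rfl⟩
  have hv : π (X 2) ∈ R := Algebra.subset_adjoin ⟨1, rfl⟩
  have hu₁ : π u₁S ∈ R := by simpa [u₁S] using add_mem (add_mem R.one_mem hu) hv
  have hv₁ : π (v₁S a b c) ∈ R := by
    have hC (r : ℂ) : π (C r) ∈ R := (π.commutes r).symm ▸ R.algebraMap_mem r
    simpa [v₁S] using add_mem (add_mem (hC a) (mul_mem (hC b) hu)) (mul_mem (hC c) hv)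
  have hq : π (u₁S * v₁S a b c * (v₁S a b c - u₁S)) ∈ R := by
    simpa using mul_mem (mul_mem hu₁ hv₁) (sub_mem hv₁ hu₁)
  have hq0 : π (u₁S * v₁S a b c * (v₁S a b c - u₁S)) ≠ 0 :=
    mt Ideal.Quotient.eq_zero_iff_mem.1 <| notMem_span_singleton_of_eval (y := 0)
      (by simp [pS]) (by simp [u₁S, v₁S, ha0, sub_ne_zero.2 ha1])
  have hw : π (X 0) ^ 3 * π (u₁S * v₁S a b c * (v₁S a b c - u₁S)) ∈ R := by
    have hpS : π (X 0 ^ 3 * u₁S * v₁S a b c * (v₁S a b c - u₁S)) = π (X 1 * X 2) :=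
      Ideal.Quotient.eq.2 (Ideal.subset_span rfl)
    rw [← map_pow, ← map_mul, ← mul_assoc, ← mul_assoc, hpS, map_mul]
    exact mul_mem hu hv
  match i with
  | 0 => exact isAlgebraic_of_pow_mul_mem three_pos hq hq0 hw
  | 1 => exact isAlgebraic_algebraMap (⟨_, hu⟩ : R)
  | 2 => exact isAlgebraic_algebraMap (⟨_, hv⟩ : R)

section SurfaceMap

variable {b c} {K : Type*} [Field K] [Algebra ℂ K] {z w t x : K}

theorem exists_algHom_span_pS (h : IsProductCoord a b c z w t x) (ha0 : a ≠ 0) (ha1 : a ≠ 1)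
    (hab : a ≠ b) (hac : a ≠ c) :
    ∃ f : AffineFunctionField (Ideal.span {pS a b c}) →ₐ[ℂ] K,
      ∀ i, f (toFunctionField _ (X i)) = surfaceCoord a b c z w t x i := by
  have := isPrime_span_pS b c ha0 ha1
  refine exists_algHom_functionField (s := ![1, 2]) (fun p hp ↦ ?_) ?_
    (isAlgebraic_X_of_span_pS b c ha0 ha1)
  · obtain ⟨q, rfl⟩ := Ideal.mem_span_singleton.1 hp
    have hu₁ : aeval (surfaceCoord a b c z w t x) u₁S = u₁Coord a b c z t := by
      simp [surfaceCoord, u₁S, u₁Coord]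
    have hv₁ : aeval (surfaceCoord a b c z w t x) (v₁S a b c) = z * u₁Coord a b c z t := by
      simp [surfaceCoord, v₁S, ← h.add_mul_uCoord_add_mul_vCoord]
    have hpS : aeval (surfaceCoord a b c z w t x) (pS a b c) = 0 := by
      simp only [pS, map_sub, map_mul, map_pow, hu₁, hv₁, aeval_X]
      exact sub_eq_zero.2 (h.surface_equation hab hac)
    rw [map_mul, hpS, zero_mul]
  · convert h.algebraicIndependent_uCoord_vCoord hab hac using 1
    ext j
    fin_cases j <;> rfl

theorem mem_fieldRange_of_apply_eq [(Ideal.span {pS a b c}).IsPrime]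
    (h : IsProductCoord a b c z w t x) (hab : a ≠ b) (hac : a ≠ c)
    {f : AffineFunctionField (Ideal.span {pS a b c}) →ₐ[ℂ] K}
    (hf : ∀ i, f (toFunctionField _ (X i)) = surfaceCoord a b c z w t x i)
    {σ : K ≃ₐ[ℂ] K} (hσ : orderOf σ = 3) (hσf : ∀ s, σ (f s) = f s) {y : K} (hy : σ y = y) :
    y ∈ f.fieldRange :=
  h.mem_of_apply_eq (F := f.fieldRange) hab hac ⟨_, hf 1⟩ ⟨_, hf 2⟩ ⟨_, hf 0⟩ hσ
    (Set.forall_mem_range.2 hσf) hy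

theorem surfaceMap_apply_eq [(Ideal.span {pS a b c}).IsPrime]
    {f : AffineFunctionField (Ideal.span {pS a b c}) →ₐ[ℂ] K}
    (hf : ∀ i, f (toFunctionField _ (X i)) = surfaceCoord a b c z w t x i) {σ : K ≃ₐ[ℂ] K}
    {r s : ℂ} (hz : σ z = z) (hw : σ w = r • w) (ht : σ t = t) (hx : σ x = s • x)
    {g : AffineFunctionField (Ideal.span {pS a b c}) ≃ₐ[ℂ]
      AffineFunctionField (Ideal.span {pS a b c})}
    (h0 : g (toFunctionField _ (X 0)) = (s / r) • toFunctionField _ (X 0))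
    (h1 : g (toFunctionField _ (X 1)) = toFunctionField _ (X 1))
    (h2 : g (toFunctionField _ (X 2)) = toFunctionField _ (X 2))
    (y : AffineFunctionField (Ideal.span {pS a b c})) : f (g y) = σ (f y) := by
  suffices f.comp g.toAlgHom = σ.toAlgHom.comp f from AlgHom.congr_fun this y
  refine algHom_functionField_ext fun i ↦ ?_
  match i with
  | 0 => simpa [h0, hf, surfaceCoord] using (map_wCoord (σ := σ.toAlgHom) hz ht hw hx).symm
  | 1 => simpa [h1, hf, surfaceCoord] using (map_uCoord (σ := σ.toAlgHom) hz ht).symm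
  | 2 => simpa [h2, hf, surfaceCoord] using (map_vCoord (σ := σ.toAlgHom) hz ht).symm

end SurfaceMap

theorem exists_algEquiv_span_pS [(Ideal.span {pS a b c}).IsPrime] {r : ℂ}
    (hr : IsPrimitiveRoot r 3) :
    ∃ σ : AffineFunctionField (Ideal.span {pS a b c}) ≃ₐ[ℂ]
        AffineFunctionField (Ideal.span {pS a b c}),
      orderOf σ = 3 ∧ σ (toFunctionField _ (X 0)) = r • toFunctionField _ (X 0) ∧
      σ (toFunctionField _ (X 1)) = toFunctionField _ (X 1) ∧
      σ (toFunctionField _ (X 2)) = toFunctionField _ (X 2) := by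
  let e : Fin 3 → ℂˣ := ![Units.ofPowEqOne r 3 hr.pow_eq_one three_ne_zero, 1, 1]
  have he : ∀ i, e i ^ 3 = 1 := by simp [e, Fin.forall_fin_succ, Units.ext_iff, hr.pow_eq_one]
  have hscale : ∀ p ∈ ({pS a b c} : Set _), scaleX e p = p := by
    rintro _ rfl
    simp [pS, u₁S, v₁S, scaleX_X, scaleX_C, smul_pow, e]
  have h := map_scaleX_span hscale
  refine ⟨scaleFunctionField h, orderOf_scaleFunctionField h he (i := 0) ?_
    (X_zero_notMem_span_pS a b c), scaleFunctionField_X h 0, ?_, ?_⟩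
  · simpa [e, Units.ext_iff] using hr.ne_one (by norm_num)
  · exact (scaleFunctionField_X h 1).trans (one_smul ℂ _)
  · exact (scaleFunctionField_X h 2).trans (one_smul ℂ _)

end Surface

section Product

variable {a b c : ℂ}

/-- The polynomial `P(z)` in factored form. -/
def branchPoly (a b c : ℂ) : Polynomial ℂ :=
  .C (b - c)⁻¹ ^ 3 * (.X * (.X - 1) * (.C b - .X) * (.X - .C c) * (.X - .C a))

theorem P4_eq_aeval_branchPoly (hbc : b ≠ c) :
    P4 a b c = Polynomial.aeval (X 0) (branchPoly a b c) := by
  have hd : C (b - c)⁻¹ * (C b - C c) = (1 : MvPolynomial (Fin 4) ℂ) := by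
    rw [← C_sub, ← C_mul, inv_mul_cancel₀ (sub_ne_zero.2 hbc), C_1]
  have hA₁b₁_sub_B₁a₁ : A₁4 b c * C (b₁ a b c) - B₁4 b c * C (a₁ a b c) =
      C (b - c)⁻¹ * (X 0 - C a) := by
    simp only [A₁4, B₁4, a₁, b₁, div_eq_mul_inv, ← neg_sub b c, inv_neg, C_mul, C_sub, C_neg]
    linear_combination C (b - c)⁻¹ * (X 0 - C a) * hd
  rw [P4, hA₁b₁_sub_B₁a₁, A₁4, B₁4, ← neg_sub b c, inv_neg]
  simp only [branchPoly, map_mul, map_pow, map_sub, map_neg, map_one, Polynomial.aeval_X,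
    Polynomial.aeval_C, algebraMap_eq]
  ring

theorem eval_aeval_X {σ R : Type*} [CommRing R] (y : σ → R) (i : σ) (p : Polynomial R) :
    eval y (Polynomial.aeval (X i) p) = p.eval (y i) := by
  rw [← coe_aeval_eq_eval, RingHom.coe_coe, ← Polynomial.aeval_algHom_apply, aeval_X,
    Polynomial.coe_aeval_eq_eval]

theorem isPrime_span_pC₁_pF₁4 (ha : a ≠ 0) (hb : b ≠ 0) (hc : c ≠ 0) (hbc : b ≠ c) :
    (Ideal.span {pC₁ a b c, pF₁4}).IsPrime := by
  have hC₁ := prime_X_pow_sub_aeval (p := branchPoly a b c) three_ne_zero (r := 0)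
    (by simp [branchPoly]) (by
      simp [branchPoly, Polynomial.derivative_mul, ha, hb, hc, sub_ne_zero.2 hbc])
  have hF₁ := prime_X_pow_sub_aeval (p := (.X * (.X + 1) : Polynomial ℂ)) three_ne_zero (r := 0)
    (by simp) (by simp [Polynomial.derivative_mul])
  have hbij : Function.Bijective (Sum.elim ![1, 0] ![3, 2] : Fin 2 ⊕ Fin 2 → Fin 4) := by decide
  have hpC₁ : pC₁ a b c =
      rename ![1, 0] (X 0 ^ 3 - Polynomial.aeval (X 1) (branchPoly a b c)) := by
    simp [pC₁, P4_eq_aeval_branchPoly hbc]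
  have hpF₁ : pF₁4 =
      rename ![3, 2] (X 0 ^ 3 - Polynomial.aeval (X 1) (.X * (.X + 1) : Polynomial ℂ)) := by
    simp [pF₁4]
  rw [hpC₁, hpF₁, Ideal.span_insert, ← Set.image_singleton (f := rename ![1, 0]),
    ← Set.image_singleton (f := rename ![3, 2]), ← Ideal.map_span, ← Ideal.map_span]
  have := (Ideal.span_singleton_prime hC₁.ne_zero).2 hC₁
  have := (Ideal.span_singleton_prime hF₁.ne_zero).2 hF₁
  exact isPrime_map_rename_sup_map_rename _ _ hbij

theorem branchPoly_mul (hbc : b ≠ c) : branchPoly a b c * (.C b - .C c) ^ 3 =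
    .X * (.X - 1) * (.C b - .X) * (.X - .C c) * (.X - .C a) := by
  have hd : Polynomial.C (b - c)⁻¹ * (.C b - .C c) = 1 := by
    rw [← Polynomial.C_sub, ← Polynomial.C_mul, inv_mul_cancel₀ (sub_ne_zero.2 hbc),
      Polynomial.C_1]
  rw [branchPoly, mul_right_comm, ← mul_pow, hd, one_pow, one_mul]

theorem algebraicIndependent_X_zero_X_two (hbc : b ≠ c)
    [(Ideal.span {pC₁ a b c, pF₁4}).IsPrime] :
    AlgebraicIndependent ℂ ![toFunctionField (Ideal.span {pC₁ a b c, pF₁4}) (X 0),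
      toFunctionField (Ideal.span {pC₁ a b c, pF₁4}) (X 2)] := by
  have hzt : ![toFunctionField (Ideal.span {pC₁ a b c, pF₁4}) (X 0), toFunctionField _ (X 2)] =
      fun j ↦ toFunctionField _ (X (![0, 2] j)) := by
    ext j
    fin_cases j <;> rfl
  rw [hzt]
  refine algebraicIndependent_toFunctionField_X fun y ↦ ?_
  obtain ⟨w, hw⟩ := IsAlgClosed.exists_pow_nat_eq ((branchPoly a b c).eval (y 0)) three_pos
  obtain ⟨x, hx⟩ := IsAlgClosed.exists_pow_nat_eq (y 1 * (y 1 + 1)) three_pos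
  refine ⟨![y 0, w, y 1, x], by ext j; fin_cases j <;> rfl, fun p hp ↦ ?_⟩
  refine (Ideal.span_le (I := RingHom.ker (eval ![y 0, w, y 1, x]))).2 ?_ hp
  rintro _ (rfl | rfl)
  · simp [pC₁, P4_eq_aeval_branchPoly hbc, eval_aeval_X, hw]
  · simp [pF₁4, hx]

theorem isProductCoord_toFunctionField (hbc : b ≠ c) [(Ideal.span {pC₁ a b c, pF₁4}).IsPrime] :
    IsProductCoord a b c (toFunctionField (Ideal.span {pC₁ a b c, pF₁4}) (X 0))
      (toFunctionField _ (X 1)) (toFunctionField _ (X 2)) (toFunctionField _ (X 3)) where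
  algebraicIndependent := algebraicIndependent_X_zero_X_two hbc
  w_pow := by
    have hw : toFunctionField (Ideal.span {pC₁ a b c, pF₁4}) (X 1 ^ 3) =
        toFunctionField _ (P4 a b c) := toFunctionField_eq_iff.2 (Ideal.subset_span (.inl rfl))
    rw [← map_pow, hw, P4_eq_aeval_branchPoly hbc, ← Polynomial.aeval_algHom_apply]
    simpa using congr(Polynomial.aeval (toFunctionField (Ideal.span {pC₁ a b c, pF₁4}) (X 0))
      $(branchPoly_mul hbc))
  x_pow := by
    have hx : toFunctionField (Ideal.span {pC₁ a b c, pF₁4}) (X 3 ^ 3) =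
        toFunctionField _ (X 2 * (X 2 + 1)) :=
      toFunctionField_eq_iff.2 (Ideal.subset_span (.inr rfl))
    simpa using hx
  adjoin_eq_top := by
    rw [← adjoin_range_toFunctionField_X]
    congr 1
    ext y
    simp [Fin.exists_fin_succ, eq_comm]

theorem exists_algEquiv_span_pC₁_pF₁4 (hbc : b ≠ c) [(Ideal.span {pC₁ a b c, pF₁4}).IsPrime]
    {r s : ℂ} (hr : IsPrimitiveRoot r 3) (hs : s ^ 3 = 1) :
    ∃ σ : AffineFunctionField (Ideal.span {pC₁ a b c, pF₁4}) ≃ₐ[ℂ]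
        AffineFunctionField (Ideal.span {pC₁ a b c, pF₁4}),
      orderOf σ = 3 ∧ σ (toFunctionField _ (X 0)) = toFunctionField _ (X 0) ∧
      σ (toFunctionField _ (X 1)) = r • toFunctionField _ (X 1) ∧
      σ (toFunctionField _ (X 2)) = toFunctionField _ (X 2) ∧
      σ (toFunctionField _ (X 3)) = s • toFunctionField _ (X 3) := by
  let e : Fin 4 → ℂˣ :=
    ![1, Units.ofPowEqOne r 3 hr.pow_eq_one three_ne_zero, 1, Units.ofPowEqOne s 3 hs three_ne_zero]
  have he : ∀ i, e i ^ 3 = 1 := by simp [e, Fin.forall_fin_succ, Units.ext_iff, hr.pow_eq_one, hs]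
  have hscale : ∀ p ∈ ({pC₁ a b c, pF₁4} : Set _), scaleX e p = p := by
    rintro _ (rfl | rfl)
    · simp [pC₁, P4, A₁4, B₁4, scaleX_X, scaleX_C, smul_pow, e]
    · simp [pF₁4, scaleX_X, smul_pow, e]
  have h := map_scaleX_span hscale
  refine ⟨scaleFunctionField h, orderOf_scaleFunctionField h he (i := 1) ?_ ?_, ?_,
    scaleFunctionField_X h 1, ?_, scaleFunctionField_X h 3⟩
  · simpa [e, Units.ext_iff] using hr.ne_one (by norm_num)
  · exact mt toFunctionField_eq_zero_iff.2 (isProductCoord_toFunctionField hbc).w_ne_zero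
  · exact (scaleFunctionField_X h 0).trans (one_smul ℂ _)
  · exact (scaleFunctionField_X h 2).trans (one_smul ℂ _)

end Product

theorem isPrimitiveRoot_ω : IsPrimitiveRoot ω 3 := by
  simpa [ω] using Complex.isPrimitiveRoot_exp 3 three_ne_zero

/-- Let `a, b, c ∈ ℂ ∖ {0,1}` be pairwise distinct and let
`K = Frac(ℂ[z,w₂,t₃,x]/(w₂³ − P(z), x³ − t₃(t₃+1)))` be the function field of `C₁ × F₁`.
Let `τ` be the order-3 automorphism of `K` with `τ(w₂) = ω²·w₂`, `τ(x) = ω²·x` (fixing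
`z, t₃`), and let `ρ` be the order-3 automorphism of `K` with `ρ(w₂) = ω·w₂` (fixing
`z, t₃, x`); `ρ` preserves the fixed field `L = K^τ`.  Then there is a `ℂ`-algebra
isomorphism `φ` from the function field of the surface `S : w³·u₁v₁(v₁−u₁) = u·v` onto
`L` intertwining the order-3 automorphism `w ↦ ω²·w` of `Frac(S)` with the restriction
of `ρ` to `L`: i.e. `S` is `G`-birationally equivalent to `(C₁ × F₁)/G` with its
residual `G = ℤ/3ℤ` action coming from the factor `C₁`. -/
theorem stmt7 (a b c : ℂ) (ha0 : a ≠ 0) (ha1 : a ≠ 1) (hb0 : b ≠ 0) (hb1 : b ≠ 1)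
    (hc0 : c ≠ 0) (hc1 : c ≠ 1) (hab : a ≠ b) (hac : a ≠ c) (hbc : b ≠ c) :
    ∃ (τ ρ : FractionRing (HSurf2 (pC₁ a b c) pF₁4) ≃ₐ[ℂ] FractionRing (HSurf2 (pC₁ a b c) pF₁4)),
      orderOf τ = 3 ∧
      τ (cls2 (pC₁ a b c) pF₁4 (X 1)) = (ω ^ 2 : ℂ) • cls2 (pC₁ a b c) pF₁4 (X 1) ∧
      τ (cls2 (pC₁ a b c) pF₁4 (X 3)) = (ω ^ 2 : ℂ) • cls2 (pC₁ a b c) pF₁4 (X 3) ∧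
      τ (cls2 (pC₁ a b c) pF₁4 (X 0)) = cls2 (pC₁ a b c) pF₁4 (X 0) ∧
      τ (cls2 (pC₁ a b c) pF₁4 (X 2)) = cls2 (pC₁ a b c) pF₁4 (X 2) ∧
      orderOf ρ = 3 ∧
      ρ (cls2 (pC₁ a b c) pF₁4 (X 1)) = (ω : ℂ) • cls2 (pC₁ a b c) pF₁4 (X 1) ∧
      ρ (cls2 (pC₁ a b c) pF₁4 (X 0)) = cls2 (pC₁ a b c) pF₁4 (X 0) ∧
      ρ (cls2 (pC₁ a b c) pF₁4 (X 2)) = cls2 (pC₁ a b c) pF₁4 (X 2) ∧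
      ρ (cls2 (pC₁ a b c) pF₁4 (X 3)) = cls2 (pC₁ a b c) pF₁4 (X 3) ∧
      (∀ k, τ k = k → τ (ρ k) = ρ k) ∧
      ∃ (σS : FractionRing (HSurf (pS a b c)) ≃ₐ[ℂ] FractionRing (HSurf (pS a b c)))
        (φ : FractionRing (HSurf (pS a b c)) ≃ₐ[ℂ]
          (AlgHom.equalizer τ.toAlgHom (AlgHom.id ℂ (FractionRing (HSurf2 (pC₁ a b c) pF₁4))))),
        orderOf σS = 3 ∧
        σS (cls (pS a b c) (X 0)) = (ω ^ 2 : ℂ) • cls (pS a b c) (X 0) ∧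
        σS (cls (pS a b c) (X 1)) = cls (pS a b c) (X 1) ∧
        σS (cls (pS a b c) (X 2)) = cls (pS a b c) (X 2) ∧
        ∀ s, (↑(φ (σS s)) : FractionRing (HSurf2 (pC₁ a b c) pF₁4)) = ρ ↑(φ s) := by
  have hI := isPrime_span_pC₁_pF₁4 ha0 hb0 hc0 hbc
  have hS := isPrime_span_pS b c ha0 ha1
  have hω := isPrimitiveRoot_ω
  have hω2 : IsPrimitiveRoot (ω ^ 2) 3 := hω.pow_of_coprime 2 (by norm_num)
  have hω0 : ω ≠ 0 := hω.ne_zero three_ne_zero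
  have h := isProductCoord_toFunctionField (a := a) hbc
  obtain ⟨τ, hτ, hτz, hτw, hτt, hτx⟩ :=
    exists_algEquiv_span_pC₁_pF₁4 (a := a) hbc hω2 hω2.pow_eq_one
  obtain ⟨ρ, hρ, hρz, hρw, hρt, hρx⟩ :=
    exists_algEquiv_span_pC₁_pF₁4 (a := a) hbc hω (one_pow 3)
  obtain ⟨σS, hσS, hσw, hσu, hσv⟩ := exists_algEquiv_span_pS (a := a) b c hω2
  obtain ⟨f, hf⟩ := exists_algHom_span_pS h ha0 ha1 hab hac
  have hτf s : τ (f s) = f s := (surfaceMap_apply_eq hf hτz hτw hτt hτx (g := .refl)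
    (by simp [hω0]) rfl rfl s).symm
  have hρf s : f (σS s) = ρ (f s) := surfaceMap_apply_eq hf hρz hρw hρt hρx
    (by rw [hσw, eq_div_of_mul_eq hω0 ((pow_succ ω 2).symm.trans hω.pow_eq_one)]) hσu hσv s
  have hfτ y (hy : τ y = y) : y ∈ f.fieldRange :=
    mem_fieldRange_of_apply_eq h hab hac hf hτ hτf hy
  obtain ⟨φ, hφ⟩ := exists_algEquiv_equalizer hτf hfτ
  refine ⟨τ, ρ, hτ, hτw, hτx, hτz, hτt, hρ, hρw, hρz, hρt, hρx.trans (one_smul ℂ _),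
    fun y hy ↦ ?_, σS, φ, hσS, hσw, hσu, hσv, fun s ↦ by rw [hφ, hφ, hρf]⟩
  obtain ⟨s, rfl : f s = y⟩ := hfτ y hy
  rw [← hρf, hτf]
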